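/- arXiv:2405.11436 — 6 statements merged into one kernel-verified Lean document; each statement's English description precedes it below -/
import Mathlib

section
/- Let N, K ≥ 1 be integers, g : Fin N → ℝ, and μ : Fin N → Fin K a labelling, so the sets D_κ := μ⁻¹(κ) partition Fin N. Assume 𝒩_κ := √(Σ_{x ∈ D_κ} g(x)²) > 0 for every κ ∈ Fin K, and set 𝒩 := √(Σ_x g(x)²). Suppose U_κ (κ ∈ Fin K) are unitaries on ℓ²(Fin N) with U_κ e₀ = (1/𝒩_κ)·Σ_{x ∈ D_κ} g(x)·e_x, and V is a unitary on ℓ²(Fin K) with V e₀ = Σ_κ (𝒩_κ/𝒩)·e_κ. Then: (a) the operator (Σ_κ |e_κ⟩⟨e_κ| ⊗ U_κ) ∘ (V ⊗ id) on ℓ²(Fin K × Fin N) maps e₀ ⊗ e₀ to the vector ψ' := (1/𝒩)·Σ_{x} g(x)·(e_{μ(x)} ⊗ e_x); and (b) the permutation operator T of ℓ²(Fin K × Fin N) defined by T(e_κ ⊗ e_x) = e_{κ − μ(x) mod K} ⊗ e_x maps ψ' to e₀ ⊗ ψ_g, where ψ_g := (1/𝒩)·Σ_x g(x)·e_x. 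-/
open scoped BigOperators

/-- Correctness of the `PREP_g` circuit assembling a reference state from pieces on
disjoint subdomains `D_κ = μ⁻¹(κ)`: (a) the controlled unitaries `U_κ` applied after the
weight-preparation `V` map `e₀ ⊗ e₀` to `ψ' = (1/𝒩)·Σ_x g(x)·e_{μ(x)} ⊗ e_x`, and
(b) the uncompute permutation `T : e_κ ⊗ e_x ↦ e_{κ−μ(x)} ⊗ e_x` maps `ψ'` to
`e₀ ⊗ ψ_g` with `ψ_g = (1/𝒩)·Σ_x g(x)·e_x`. -/
theorem stmt1 (N K : ℕ) [NeZero N] [NeZero K]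
    (g : Fin N → ℝ) (μ : Fin N → Fin K)
    (𝒩sub : Fin K → ℝ)
    (h𝒩sub : ∀ κ, 𝒩sub κ
      = Real.sqrt (∑ x ∈ Finset.univ.filter (fun x => μ x = κ), g x ^ 2))
    (h𝒩pos : ∀ κ, 0 < 𝒩sub κ)
    (𝒩 : ℝ) (h𝒩 : 𝒩 = Real.sqrt (∑ x, g x ^ 2))
    (U : Fin K → Matrix.unitaryGroup (Fin N) ℂ)
    (hU : ∀ κ, (U κ : Matrix (Fin N) (Fin N) ℂ).mulVec (Pi.single 0 1)
      = fun x => if μ x = κ then ((g x / 𝒩sub κ : ℝ) : ℂ) else 0)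
    (V : Matrix.unitaryGroup (Fin K) ℂ)
    (hV : (V : Matrix (Fin K) (Fin K) ℂ).mulVec (Pi.single 0 1)
      = fun κ => ((𝒩sub κ / 𝒩 : ℝ) : ℂ))
    (W : Matrix (Fin K × Fin N) (Fin K × Fin N) ℂ)
    (hW : W =
      (Matrix.of fun p q : Fin K × Fin N =>
        if p.1 = q.1 then (U p.1 : Matrix (Fin N) (Fin N) ℂ) p.2 q.2 else 0)
      * (Matrix.of fun p q : Fin K × Fin N =>
        (V : Matrix (Fin K) (Fin K) ℂ) p.1 q.1 * (if p.2 = q.2 then 1 else 0)))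
    (T : Matrix (Fin K × Fin N) (Fin K × Fin N) ℂ)
    (hT : T = Matrix.of fun p q : Fin K × Fin N =>
      if p.1 = q.1 - μ q.2 ∧ p.2 = q.2 then 1 else 0)
    (ψ' : Fin K × Fin N → ℂ)
    (hψ' : ψ' = fun p => if p.1 = μ p.2 then ((g p.2 / 𝒩 : ℝ) : ℂ) else 0) :
    W.mulVec (Pi.single ((0 : Fin K), (0 : Fin N)) 1) = ψ' ∧
    T.mulVec ψ'
      = fun p : Fin K × Fin N =>
          (if p.1 = 0 then 1 else 0) * ((g p.2 / 𝒩 : ℝ) : ℂ) := by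
  have hU' : ∀ κ x, (U κ : Matrix (Fin N) (Fin N) ℂ) x 0
      = if μ x = κ then ((g x / 𝒩sub κ : ℝ) : ℂ) else 0 := by
    intro κ x
    have h := congrFun (hU κ) x
    rw [Matrix.mulVec_single_one] at h
    exact h
  have hV' : ∀ κ, (V : Matrix (Fin K) (Fin K) ℂ) κ 0 = ((𝒩sub κ / 𝒩 : ℝ) : ℂ) := by
    intro κ
    have h := congrFun hV κ
    rw [Matrix.mulVec_single_one] at h
    exact h
  constructor
  · rw [Matrix.mulVec_single_one]
    funext p
    obtain ⟨κ, x⟩ := p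
    subst hW hψ'
    have hsum : ∀ F : Fin K × Fin N → ℂ, ∑ q, F q = ∑ a, ∑ b, F (a, b) :=
      fun F => Fintype.sum_prod_type F
    simp only [Matrix.col_apply, Matrix.mul_apply, Matrix.of_apply, hsum]
    rw [Finset.sum_eq_single κ]
    · rw [Finset.sum_eq_single (0 : Fin N)]
      · simp only [if_true, mul_one, hU', hV']
        by_cases h : μ x = κ
        · rw [if_pos h, if_pos h.symm, ← Complex.ofReal_mul]
          congr 1
          have := (h𝒩pos κ).ne'
          rw [div_mul_div_cancel₀ this]
        · rw [if_neg h, if_neg (fun e => h e.symm), zero_mul]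
      · intro b _ hb
        simp [hb]
      · simp
    · intro a _ ha
      simp [Ne.symm ha]
    · simp
  · funext p
    obtain ⟨κ, x⟩ := p
    subst hT hψ'
    have hsum : ∀ F : Fin K × Fin N → ℂ, ∑ q, F q = ∑ a, ∑ b, F (a, b) :=
      fun F => Fintype.sum_prod_type F
    simp only [Matrix.mulVec, dotProduct, Matrix.of_apply, hsum]
    rw [Finset.sum_eq_single (μ x)]
    · rw [Finset.sum_eq_single x]
      · simp
      · intro b _ hb
        simp [Ne.symm hb]
      · simp
    · intro a _ ha
      apply Finset.sum_eq_zero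
      intro b _
      by_cases hb : x = b
      · subst hb
        simp [ha]
      · simp [hb]
    · simp
end

section
/- Let f, g, ν, ε₀, ε̃, r̃ be real numbers and M a positive integer, with f ≥ 0, g > 0, ν > 0, ε₀ > 0, ε̃ ≥ 0. Assume: (i) |r̃ − f/g| ≤ ε̃; (ii) ε̃ ≤ ε₀·ν/g; and (iii) M·(ε₀·ν/g − ε̃) ≥ 1. Then | g·⌊M·r̃⌋/(M·ν) − f/ν | ≤ ε₀. -/
/-- Accuracy of the floor-based comparator: if `r̃` approximates `f/g` within `ε̃`,
`ε̃ ≤ ε₀·ν/g`, and `M·(ε₀·ν/g − ε̃) ≥ 1`, then `g·⌊M·r̃⌋/(M·ν)` approximates `f/ν`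
within `ε₀`. -/
theorem stmt3 (f g ν ε₀ εt rt : ℝ) (M : ℕ) (hM : 0 < M)
    (hf : 0 ≤ f) (hg : 0 < g) (hν : 0 < ν) (hε₀ : 0 < ε₀) (hεt : 0 ≤ εt)
    (h1 : |rt - f / g| ≤ εt)
    (h2 : εt ≤ ε₀ * ν / g)
    (h3 : 1 ≤ (M : ℝ) * (ε₀ * ν / g - εt)) :
    |g * (⌊(M : ℝ) * rt⌋ : ℝ) / ((M : ℝ) * ν) - f / ν| ≤ ε₀ := by
  have hMr : (0 : ℝ) < M := by exact_mod_cast hM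
  have hc : 0 < g / ((M : ℝ) * ν) := by positivity
  have ha := Int.floor_le ((M : ℝ) * rt)
  have hb := Int.lt_floor_add_one ((M : ℝ) * rt)
  obtain ⟨hl, hu⟩ := abs_le.mp h1
  have hl' := mul_le_mul_of_nonneg_left hl hMr.le
  have hu' := mul_le_mul_of_nonneg_left hu hMr.le
  have h2' := mul_le_mul_of_nonneg_left h2 hMr.le
  have key : |(⌊(M : ℝ) * rt⌋ : ℝ) - M * (f / g)| ≤ M * (ε₀ * ν / g) := by
    rw [abs_le]
    constructor <;> linarith
  have e : g * (⌊(M : ℝ) * rt⌋ : ℝ) / ((M : ℝ) * ν) - f / ν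
      = g / ((M : ℝ) * ν) * ((⌊(M : ℝ) * rt⌋ : ℝ) - M * (f / g)) := by
    field_simp
  rw [e, abs_mul, abs_of_pos hc]
  calc _ ≤ g / ((M : ℝ) * ν) * (M * (ε₀ * ν / g)) :=
        mul_le_mul_of_nonneg_left key hc.le
    _ = ε₀ := by field_simp
end

section
/- For every real β > 0 with β ≠ 1/2 and every integer n ≥ 1: Σ_{x=1}^{2^n−1} x^{−2β} ≥ ((2^{1−2β} − 1)/(1 − 2β)) · Σ_{μ=0}^{n−1} 2^{μ(1−2β)}. Equivalently, the success probability P_succ = 𝒩_f²/𝒩_g² of quantum rejection sampling for the power-law target with the ziggurat reference satisfies P_succ ≥ (2^{1−2β} − 1)/(1 − 2β). -/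
open scoped BigOperators

/-- Success probability of quantum rejection sampling for the power-law target
`f(x) = x^{-β}` with the ziggurat reference: for `β > 0`, `β ≠ 1/2`,
`𝒩_f² = Σ_{x=1}^{2^n−1} x^{−2β}` is at least `((2^{1−2β} − 1)/(1 − 2β))·𝒩_g²`,
where `𝒩_g² = Σ_{μ=0}^{n−1} 2^{μ(1−2β)}`. -/
theorem stmt4 (β : ℝ) (hβ : 0 < β) (hβ' : β ≠ 1 / 2) (n : ℕ) (hn : 1 ≤ n) :
    (∑ x ∈ Finset.Icc (1 : ℕ) (2 ^ n - 1), (x : ℝ) ^ (-(2 * β)))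
      ≥ ((2 : ℝ) ^ (1 - 2 * β) - 1) / (1 - 2 * β)
        * ∑ μ ∈ Finset.range n, (2 : ℝ) ^ ((μ : ℝ) * (1 - 2 * β)) := by
  have hp : 1 ≤ 2 ^ n := Nat.one_le_two_pow
  have hI : Finset.Icc (1 : ℕ) (2 ^ n - 1) = Finset.Ico 1 (2 ^ n) := by
    ext x
    simp only [Finset.mem_Icc, Finset.mem_Ico]
    omega
  have hanti : AntitoneOn (fun x : ℝ => x ^ (-(2 * β))) (Set.Icc ((1 : ℕ) : ℝ) ((2 ^ n : ℕ) : ℝ)) := by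
    intro x hx y hy hxy
    have h1 : (1 : ℝ) ≤ x := by simpa using hx.1
    exact Real.rpow_le_rpow_of_nonpos (by linarith) hxy (by linarith)
  have key := hanti.integral_le_sum_Ico hp
  have hpR : (1 : ℝ) ≤ 2 ^ n := one_le_pow₀ (by norm_num)
  have hint : ∫ x in ((1 : ℕ) : ℝ)..((2 ^ n : ℕ) : ℝ), x ^ (-(2 * β))
      = (((2 : ℝ) ^ n) ^ (1 - 2 * β) - 1) / (1 - 2 * β) := by
    rw [integral_rpow]
    · push_cast
      rw [Real.one_rpow, show -(2 * β) + 1 = 1 - 2 * β by ring]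
    · right
      refine ⟨fun h => hβ' (by linarith), ?_⟩
      push_cast
      rw [Set.uIcc_of_le hpR]
      intro h
      have := h.1
      linarith
  have hsum : ((2 : ℝ) ^ (1 - 2 * β) - 1) * ∑ μ ∈ Finset.range n, (2 : ℝ) ^ ((μ : ℝ) * (1 - 2 * β))
      = ((2 : ℝ) ^ n) ^ (1 - 2 * β) - 1 := by
    have e : ∀ m : ℕ, (2 : ℝ) ^ ((m : ℝ) * (1 - 2 * β)) = ((2 : ℝ) ^ (1 - 2 * β)) ^ m := by
      intro m
      rw [mul_comm, Real.rpow_mul (by norm_num), Real.rpow_natCast]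
    simp only [e]
    rw [mul_geom_sum, ← e, Real.rpow_mul (by norm_num), Real.rpow_natCast]
  rw [hI, ge_iff_le, div_mul_eq_mul_div, hsum, ← hint]
  exact key
end

section
/- For every real β ≥ 1 and every integer n ≥ 1, set 𝒩_f² := Σ_{x=1}^{2^n−1} x^{−2β} and 𝒩_g² := Σ_{μ=0}^{n−1} 2^{μ(1−2β)}. Then 0 < 𝒩_f ≤ 𝒩_g, and the number of amplitude-amplification rounds R := ⌈ π/(4·arcsin(𝒩_f/𝒩_g)) − 1/2 ⌉ satisfies R ≤ 2β + 1. -/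
open scoped BigOperators

lemma block_le (β : ℝ) (hβ : 1 ≤ β) (n : ℕ) :
    ∑ x ∈ Finset.Ico (1 : ℕ) (2 ^ n), (x : ℝ) ^ (-(2 * β)) ≤
      ∑ μ ∈ Finset.range n, (2 : ℝ) ^ ((μ : ℝ) * (1 - 2 * β)) := by
  induction n with
  | zero => simp
  | succ n ih =>
    rw [Finset.sum_range_succ, ← Finset.sum_Ico_consecutive _ (Nat.one_le_two_pow (n := n))
      (Nat.pow_le_pow_right (by norm_num) (Nat.le_succ n))]
    refine add_le_add ih ?_
    have h : ∀ x ∈ Finset.Ico (2 ^ n : ℕ) (2 ^ (n + 1)),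
        (x : ℝ) ^ (-(2 * β)) ≤ ((2 : ℝ) ^ n) ^ (-(2 * β)) := by
      intro x hx
      have hx1 : ((2 : ℝ) ^ n) ≤ x := by exact_mod_cast (Finset.mem_Ico.mp hx).1
      exact Real.rpow_le_rpow_of_nonpos (by positivity) hx1 (by linarith)
    refine (Finset.sum_le_card_nsmul _ _ _ h).trans (le_of_eq ?_)
    have hc : (2 ^ (n + 1) - 2 ^ n : ℕ) = 2 ^ n := by rw [pow_succ]; omega
    rw [Nat.card_Ico, hc, nsmul_eq_mul]
    push_cast
    rw [← Real.rpow_natCast, ← Real.rpow_mul (by norm_num), ← Real.rpow_add (by norm_num)]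
    congr 1
    ring

lemma ref_le_two (β : ℝ) (hβ : 1 ≤ β) (n : ℕ) :
    ∑ μ ∈ Finset.range n, (2 : ℝ) ^ ((μ : ℝ) * (1 - 2 * β)) ≤ 2 := by
  refine le_trans (Finset.sum_le_sum (g := fun μ : ℕ => (1 / 2 : ℝ) ^ μ) ?_)
    (sum_geometric_two_le n)
  intro μ _
  have h : (1 / 2 : ℝ) ^ μ = (2 : ℝ) ^ (-(μ : ℝ)) := by
    rw [Real.rpow_neg (by norm_num), Real.rpow_natCast]; simp
  simp only [h]
  refine Real.rpow_le_rpow_of_exponent_le (by norm_num) ?_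
  have : (0 : ℝ) ≤ μ := Nat.cast_nonneg _
  nlinarith

/-- For the power-law target `f(x) = x^{−β}` with `β ≥ 1` and its ziggurat reference,
`0 < 𝒩_f ≤ 𝒩_g`, and the number of amplitude-amplification rounds
`R = ⌈π/(4·arcsin(𝒩_f/𝒩_g)) − 1/2⌉` satisfies `R ≤ 2β + 1`. -/
theorem stmt6 (β : ℝ) (hβ : 1 ≤ β) (n : ℕ) (hn : 1 ≤ n) (Nf Ng : ℝ)
    (hNf : Nf = Real.sqrt (∑ x ∈ Finset.Icc (1 : ℕ) (2 ^ n - 1), (x : ℝ) ^ (-(2 * β))))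
    (hNg : Ng = Real.sqrt (∑ μ ∈ Finset.range n, (2 : ℝ) ^ ((μ : ℝ) * (1 - 2 * β)))) :
    0 < Nf ∧ Nf ≤ Ng ∧
      ((⌈Real.pi / (4 * Real.arcsin (Nf / Ng)) - 1 / 2⌉ : ℤ) : ℝ) ≤ 2 * β + 1 := by
  have hI : Finset.Icc (1 : ℕ) (2 ^ n - 1) = Finset.Ico 1 (2 ^ n) := by
    ext x
    have := Nat.one_le_two_pow (n := n)
    simp only [Finset.mem_Icc, Finset.mem_Ico]
    omega
  rw [hI] at hNf
  have h2 : 2 ^ 1 ≤ 2 ^ n := Nat.pow_le_pow_right (by norm_num) hn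
  have h1 : 1 ≤ ∑ x ∈ Finset.Ico (1 : ℕ) (2 ^ n), (x : ℝ) ^ (-(2 * β)) := by
    have := Finset.single_le_sum (s := Finset.Ico (1 : ℕ) (2 ^ n))
      (f := fun x : ℕ => (x : ℝ) ^ (-(2 * β))) (fun i _ => by positivity)
      (Finset.mem_Ico.mpr ⟨le_refl 1, by omega⟩)
    simpa using this
  have hNf1 : 1 ≤ Nf := by rw [hNf]; exact Real.one_le_sqrt.mpr h1
  have hle : Nf ≤ Ng := by rw [hNf, hNg]; exact Real.sqrt_le_sqrt (block_le β hβ n)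
  have hNg2 : Ng ≤ √2 := by rw [hNg]; exact Real.sqrt_le_sqrt (ref_le_two β hβ n)
  refine ⟨by linarith, hle, ?_⟩
  have hr : √2 / 2 ≤ Nf / Ng := by
    rw [div_le_div_iff₀ (by norm_num) (by linarith)]
    have := Real.mul_self_sqrt (show (0 : ℝ) ≤ 2 by norm_num)
    nlinarith [Real.sqrt_nonneg 2]
  have ha : Real.pi / 4 ≤ Real.arcsin (Nf / Ng) := by
    rw [Real.le_arcsin_iff_sin_le' ⟨by linarith [Real.pi_pos], by linarith [Real.pi_pos]⟩,
      Real.sin_pi_div_four]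
    exact hr
  have hq : Real.pi / (4 * Real.arcsin (Nf / Ng)) ≤ 1 := by
    rw [div_le_one (by linarith [Real.pi_pos])]
    linarith
  have hceil : ⌈Real.pi / (4 * Real.arcsin (Nf / Ng)) - 1 / 2⌉ ≤ (1 : ℤ) := by
    rw [Int.ceil_le]
    push_cast
    linarith
  have : ((⌈Real.pi / (4 * Real.arcsin (Nf / Ng)) - 1 / 2⌉ : ℤ) : ℝ) ≤ 1 := by
    exact_mod_cast hceil
  linarith
end

section
/- Let δ, σ be real numbers with 0 < δ, 8δ ≤ σ and σ ≤ 1/4, and let T = {(k+1/2)·δ : k ∈ ℕ, (k+1/2)·δ ≤ 1/2}. Then Σ_{t∈T} exp(−2t²/σ²) ≥ (1/4)·( #{t ∈ T : t ≤ σ} + Σ_{t∈T, t>σ} exp(−2t/σ) ). Equivalently, for the Gaussian target f(x) = exp(−x²/σ²) on the symmetric grid ±T and the reference g with g(x) = 1 for |x| ≤ σ and g(x) = exp(−|x|/σ) for |x| > σ, the success probability 𝒩_f²/𝒩_g² is at least 1/4, so a single round of amplitude amplification suffices. -/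
open scoped BigOperators

lemma sum_sq_aux (N : ℕ) : ∑ k ∈ Finset.range N, ((k : ℝ) + 1 / 2) ^ 2 = N * (4 * (N : ℝ) ^ 2 - 1) / 12 := by
  induction N with
  | zero => simp
  | succ n ih => rw [Finset.sum_range_succ, ih]; push_cast; ring

lemma main_lower (u : ℝ) (hu : 0 < u) (hu8 : u ≤ 1 / 8) (N : ℕ) (hN : ((N : ℝ) - 1 / 2) * u ≤ 1) :
    (37 / 100 : ℝ) * N ≤ ∑ k ∈ Finset.range N, Real.exp (-2 * (((k : ℝ) + 1 / 2) * u) ^ 2) := by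
  have hpt : ∀ k ∈ Finset.range N, Real.exp (-(1 / 2)) * (3 / 2 - 2 * u ^ 2 * ((k : ℝ) + 1 / 2) ^ 2)
      ≤ Real.exp (-2 * (((k : ℝ) + 1 / 2) * u) ^ 2) := by
    intro k _
    have h : Real.exp (-2 * (((k : ℝ) + 1 / 2) * u) ^ 2) = Real.exp (-(1 / 2)) *
        Real.exp (1 / 2 - 2 * u ^ 2 * ((k : ℝ) + 1 / 2) ^ 2) := by
      rw [← Real.exp_add]; congr 1; ring
    rw [h]
    refine mul_le_mul_of_nonneg_left ?_ (Real.exp_pos _).le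
    have := Real.add_one_le_exp (1 / 2 - 2 * u ^ 2 * ((k : ℝ) + 1 / 2) ^ 2)
    linarith
  refine le_trans ?_ (Finset.sum_le_sum hpt)
  rw [← Finset.mul_sum, Finset.sum_sub_distrib, ← Finset.mul_sum, sum_sq_aux]
  simp only [Finset.sum_const, Finset.card_range, nsmul_eq_mul]
  have he : (1 / 2 : ℝ) ≤ Real.exp (-(1 / 2)) := by
    have := Real.add_one_le_exp (-(1 / 2) : ℝ)
    linarith
  have hN0 : (0 : ℝ) ≤ N := Nat.cast_nonneg N
  have hNu : (N : ℝ) * u ≤ 17 / 16 := by nlinarith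
  have hNu2 : ((N : ℝ) * u) ^ 2 ≤ (17 / 16) ^ 2 := pow_le_pow_left₀ (by positivity) hNu 2
  have h1 : (74 / 100 : ℝ) * N ≤ N * (3 / 2) - 2 * u ^ 2 * (N * (4 * (N : ℝ) ^ 2 - 1) / 12) := by
    have : N * (3 / 2) - 2 * u ^ 2 * (N * (4 * (N : ℝ) ^ 2 - 1) / 12) =
      N * (3 / 2 - 2 / 3 * ((N : ℝ) * u) ^ 2) + N * u ^ 2 / 6 := by ring
    rw [this]
    have h3 : (0 : ℝ) ≤ N * u ^ 2 / 6 := by positivity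
    have h4 : (N : ℝ) * (74 / 100) ≤ N * (3 / 2 - 2 / 3 * ((N : ℝ) * u) ^ 2) :=
      mul_le_mul_of_nonneg_left (by norm_num at hNu2 ⊢; linarith) hN0
    linarith
  nlinarith

lemma tail_upper (u : ℝ) (hu : 0 < u) (hu8 : u ≤ 1 / 8) (N : ℕ) (hN : 1 < ((N : ℝ) + 1 / 2) * u)
    (M : ℕ) :
    ∑ k ∈ Finset.Ico N M, Real.exp (-2 * (((k : ℝ) + 1 / 2) * u)) ≤ (15 / 100 : ℝ) * N := by
  have hr1 : Real.exp (-(2 * u)) ≤ 1 / (1 + 2 * u) := by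
    rw [Real.exp_neg, ← one_div]
    apply one_div_le_one_div_of_le (by linarith)
    have := Real.add_one_le_exp (2 * u)
    linarith
  have hr2 : (1 : ℝ) / (1 + 2 * u) < 1 := by rw [div_lt_one (by linarith)]; linarith
  have hg := geom_sum_Ico_le_of_lt_one (m := N) (n := M) (Real.exp_pos (-(2 * u))).le (hr1.trans_lt hr2)
  have heq : ∀ k : ℕ, Real.exp (-2 * (((k : ℝ) + 1 / 2) * u)) =
      Real.exp (-u) * Real.exp (-(2 * u)) ^ k := by
    intro k
    rw [← Real.exp_nat_mul, ← Real.exp_add]; congr 1; ring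
  have h5 : Real.exp (-u) * Real.exp (-(2 * u)) ^ N ≤ 1 / 5 := by
    rw [← heq]
    have h2 : Real.exp (-2 * (((N : ℝ) + 1 / 2) * u)) ≤ Real.exp (-2) :=
      Real.exp_le_exp.2 (by linarith)
    refine h2.trans ?_
    rw [Real.exp_neg, ← one_div]
    apply one_div_le_one_div_of_le (by norm_num)
    have := Real.quadratic_le_exp_of_nonneg (x := 2) (by norm_num)
    linarith
  rw [Finset.sum_congr rfl (fun k _ => heq k), ← Finset.mul_sum]
  have hd : 2 * u / (1 + 2 * u) ≤ 1 - Real.exp (-(2 * u)) := by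
    have : 2 * u / (1 + 2 * u) = 1 - 1 / (1 + 2 * u) := by field_simp; ring
    linarith
  have hdpos : 0 < 2 * u / (1 + 2 * u) := by positivity
  calc _ ≤ Real.exp (-u) * (Real.exp (-(2 * u)) ^ N / (1 - Real.exp (-(2 * u)))) :=
        mul_le_mul_of_nonneg_left hg (Real.exp_pos _).le
    _ = (Real.exp (-u) * Real.exp (-(2 * u)) ^ N) / (1 - Real.exp (-(2 * u))) := by ring
    _ ≤ (1 / 5) / (2 * u / (1 + 2 * u)) := by gcongr
    _ ≤ _ := by
      rw [div_le_iff₀ hdpos, mul_div_assoc', le_div_iff₀ (by linarith)]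
      nlinarith

/-- Success probability for Gaussian state preparation: on the positive half of the
symmetric grid `T = {(k+1/2)·δ : (k+1/2)·δ ≤ 1/2}` with `0 < δ`, `8δ ≤ σ ≤ 1/4`, the
Gaussian target `f(t) = exp(−t²/σ²)` and the reference `g` equal to `1` for `t ≤ σ`
and `exp(−t/σ)` for `t > σ` satisfy `𝒩_f² ≥ (1/4)·𝒩_g²`; equivalently the success
probability `𝒩_f²/𝒩_g²` is at least `1/4`. -/
theorem stmt7 (δ σ : ℝ) (hδ : 0 < δ) (hδσ : 8 * δ ≤ σ) (hσ : σ ≤ 1 / 4)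
    (T : Finset ℕ) (hT : ∀ k : ℕ, k ∈ T ↔ ((k : ℝ) + 1 / 2) * δ ≤ 1 / 2) :
    (∑ k ∈ T, Real.exp (-2 * (((k : ℝ) + 1 / 2) * δ) ^ 2 / σ ^ 2))
      ≥ (1 / 4) * (((T.filter fun k : ℕ => ((k : ℝ) + 1 / 2) * δ ≤ σ).card : ℝ)
        + ∑ k ∈ T.filter fun k : ℕ => σ < ((k : ℝ) + 1 / 2) * δ,
            Real.exp (-2 * (((k : ℝ) + 1 / 2) * δ) / σ)) ∧
    (∑ k ∈ T, Real.exp (-2 * (((k : ℝ) + 1 / 2) * δ) ^ 2 / σ ^ 2))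
      / (((T.filter fun k : ℕ => ((k : ℝ) + 1 / 2) * δ ≤ σ).card : ℝ)
        + ∑ k ∈ T.filter fun k : ℕ => σ < ((k : ℝ) + 1 / 2) * δ,
            Real.exp (-2 * (((k : ℝ) + 1 / 2) * δ) / σ)) ≥ 1 / 4 := by
  have hσ0 : 0 < σ := by linarith
  obtain ⟨u, hu⟩ : ∃ u, u = δ / σ := ⟨_, rfl⟩
  have hδu : δ = u * σ := by rw [hu]; field_simp
  have hu0 : 0 < u := by rw [hu]; positivity
  have hu8 : u ≤ 1 / 8 := by rw [hu, div_le_iff₀ hσ0]; linarith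
  obtain ⟨N, hN⟩ : ∃ N, N = ⌊1 / u + 1 / 2⌋₊ := ⟨_, rfl⟩
  have hlt : ∀ k : ℕ, k < N ↔ ((k : ℝ) + 1 / 2) * u ≤ 1 := by
    intro k
    rw [hN, ← Nat.succ_le_iff, Nat.le_floor_iff (by positivity), ← le_div_iff₀ hu0]
    push_cast
    constructor <;> intro h <;> linarith
  have hσiff : ∀ k : ℕ, ((k : ℝ) + 1 / 2) * δ ≤ σ ↔ k < N := by
    intro k
    rw [hlt, hδu, ← mul_assoc]
    exact ⟨fun h => by nlinarith, fun h => by nlinarith⟩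
  have hNT : ∀ k, k < N → k ∈ T := by
    intro k hk
    rw [hT]
    have := (hσiff k).2 hk
    linarith
  have hN2 : 1 < ((N : ℝ) + 1 / 2) * u := not_le.1 (fun h => lt_irrefl N ((hlt N).2 h))
  have hNpos : 0 < N := (hlt 0).2 (by norm_num; linarith)
  have hN1 : ((N : ℝ) - 1 / 2) * u ≤ 1 := by
    have h := (hlt (N - 1)).1 (by omega)
    rw [Nat.cast_sub hNpos] at h
    push_cast at h
    linarith
  have hcard : (T.filter fun k : ℕ => ((k : ℝ) + 1 / 2) * δ ≤ σ) = Finset.range N := by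
    ext k
    simp only [Finset.mem_filter, Finset.mem_range, hσiff]
    exact ⟨fun h => h.2, fun h => ⟨hNT k h, h⟩⟩
  have hsub : (T.filter fun k : ℕ => σ < ((k : ℝ) + 1 / 2) * δ) ⊆ Finset.Ico N (T.sup id + 1) := by
    intro k hk
    rw [Finset.mem_filter, ← not_le, hσiff, not_lt] at hk
    have := Finset.le_sup (f := id) hk.1
    simp only [id] at this
    rw [Finset.mem_Ico]
    exact ⟨hk.2, Nat.lt_succ_of_le this⟩
  have htail : ∑ k ∈ T.filter fun k : ℕ => σ < ((k : ℝ) + 1 / 2) * δ,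
            Real.exp (-2 * (((k : ℝ) + 1 / 2) * δ) / σ) ≤ (15 / 100 : ℝ) * N := by
    refine le_trans (Finset.sum_le_sum_of_subset_of_nonneg hsub
      (fun _ _ _ => (Real.exp_pos _).le)) (le_trans (le_of_eq ?_)
      (tail_upper u hu0 hu8 N hN2 (T.sup id + 1)))
    refine Finset.sum_congr rfl fun k _ => ?_
    congr 1
    rw [hδu]; field_simp
  have htail0 : 0 ≤ ∑ k ∈ T.filter fun k : ℕ => σ < ((k : ℝ) + 1 / 2) * δ,
            Real.exp (-2 * (((k : ℝ) + 1 / 2) * δ) / σ) :=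
    Finset.sum_nonneg fun _ _ => (Real.exp_pos _).le
  have hmain : (37 / 100 : ℝ) * N ≤
      ∑ k ∈ T, Real.exp (-2 * (((k : ℝ) + 1 / 2) * δ) ^ 2 / σ ^ 2) := by
    refine le_trans (main_lower u hu0 hu8 N hN1) (le_trans (le_of_eq ?_)
      (Finset.sum_le_sum_of_subset_of_nonneg
        (fun k hk => hNT k (Finset.mem_range.1 hk)) (fun _ _ _ => (Real.exp_pos _).le)))
    refine Finset.sum_congr rfl fun k _ => ?_
    congr 1
    rw [hδu]; field_simp
  rw [hcard, Finset.card_range]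
  have hNr : (0 : ℝ) < N := by exact_mod_cast hNpos
  refine ⟨by linarith, ?_⟩
  rw [ge_iff_le, le_div_iff₀ (by linarith)]
  linarith
end

section
/- Let N, ν ≥ 1 be integers, S₁,…,S_ν ⊆ Fin N × Fin N pairwise disjoint, g₁,…,g_ν ≥ 0 reals, and d_k, d'_k ≥ 1 integers such that for every k: #{i : (i,j) ∈ S_k} = d_k for every j, and #{j : (i,j) ∈ S_k} = d'_k for every i. Define χ(k,i,j) = (d'_k/d_k)^{1/4}·√(g_k) if (i,j) ∈ S_k and χ(k,i,j) = 0 otherwise; φ(k,j,i) = (d_k/d'_k)^{1/4}·√(g_k) if (i,j) ∈ S_k and φ(k,j,i) = 0 otherwise; and α = Σ_{k=1}^{ν} √(d_k·d'_k)·g_k. Then: (a) for every j, Σ_{k,i} χ(k,i,j)² = α; (b) for every i, Σ_{k,j} φ(k,j,i)² = α; and (c) for every (i,j), Σ_k χ(k,i,j)·φ(k,j,i) = G i j, where G i j := g_k if (i,j) ∈ S_k and G i j := 0 if (i,j) is in no S_k. Hence, when α > 0, the defining relation Σ_k χ(k,i,j)·φ(k,j,i)/(𝒩_χ(j)·𝒩_φ(i))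 = G i j/α of the block-encoding theorem holds, with 𝒩_χ(j) = 𝒩_φ(i) = √α for all i, j. -/
open scoped BigOperators

theorem zig_aux (a b g : ℝ) (ha : 0 < a) (hb : 0 < b) (hg : 0 ≤ g) :
    a * ((b / a) ^ ((1 : ℝ) / 4) * Real.sqrt g) ^ 2 = Real.sqrt (a * b) * g := by
  have h1 : ((b / a) ^ ((1 : ℝ) / 4)) ^ 2 = Real.sqrt (b / a) := by
    rw [← Real.rpow_natCast, ← Real.rpow_mul (by positivity), Real.sqrt_eq_rpow]
    norm_num
  have h2 : Real.sqrt (a * b) = a * Real.sqrt (b / a) := by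
    have : a * b = a ^ 2 * (b / a) := by field_simp
    rw [this, Real.sqrt_mul (by positivity), Real.sqrt_sq ha.le]
  rw [mul_pow, h1, Real.sq_sqrt hg, h2]
  ring

theorem zig_prod (a b g : ℝ) (ha : 0 < a) (hb : 0 < b) (hg : 0 ≤ g) :
    ((b / a) ^ ((1 : ℝ) / 4) * Real.sqrt g) * ((a / b) ^ ((1 : ℝ) / 4) * Real.sqrt g) = g := by
  have h1 : (b / a) ^ ((1 : ℝ) / 4) * (a / b) ^ ((1 : ℝ) / 4) = 1 := by
    rw [← Real.mul_rpow (by positivity) (by positivity)]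
    have : b / a * (a / b) = 1 := by field_simp
    rw [this, Real.one_rpow]
  rw [mul_mul_mul_comm, h1, Real.mul_self_sqrt hg, one_mul]

/-- The matrix-ziggurat reference data satisfy the defining relation of the rejection
sampling block-encoding theorem: with `χ(k,i,j) = (d'_k/d_k)^{1/4}·√(g_k)` and
`φ(k,j,i) = (d_k/d'_k)^{1/4}·√(g_k)` on `S_k` (zero elsewhere), the normalizations are
`𝒩_χ(j)² = 𝒩_φ(i)² = α = Σ_k √(d_k·d'_k)·g_k`, and
`Σ_k χ(k,i,j)·φ(k,j,i) = G i j`, where `G i j = g_k` for `(i,j) ∈ S_k` and `0`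
otherwise; hence `Σ_k χ·φ/(𝒩_χ·𝒩_φ) = G i j/α` when `α > 0`. -/
theorem stmt14 (N ν : ℕ) (hN : 1 ≤ N) (hν : 1 ≤ ν)
    (S : Fin ν → Finset (Fin N × Fin N))
    (hdisj : ∀ k l, k ≠ l → Disjoint (S k) (S l))
    (g : Fin ν → ℝ) (hg : ∀ k, 0 ≤ g k)
    (d d' : Fin ν → ℕ) (hd : ∀ k, 1 ≤ d k) (hd' : ∀ k, 1 ≤ d' k)
    (hcol : ∀ k j, ((S k).filter fun p => p.2 = j).card = d k)
    (hrow : ∀ k i, ((S k).filter fun p => p.1 = i).card = d' k)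
    (χ φ : Fin ν → Fin N → Fin N → ℝ)
    (hχ : ∀ k i j, χ k i j =
      if (i, j) ∈ S k then ((d' k : ℝ) / (d k : ℝ)) ^ ((1 : ℝ) / 4) * Real.sqrt (g k)
      else 0)
    (hφ : ∀ k j i, φ k j i =
      if (i, j) ∈ S k then ((d k : ℝ) / (d' k : ℝ)) ^ ((1 : ℝ) / 4) * Real.sqrt (g k)
      else 0)
    (α : ℝ) (hα : α = ∑ k, Real.sqrt ((d k : ℝ) * (d' k : ℝ)) * g k)
    (G : Fin N → Fin N → ℝ)
    (hGmem : ∀ k i j, (i, j) ∈ S k → G i j = g k)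
    (hGnot : ∀ i j, (∀ k, (i, j) ∉ S k) → G i j = 0) :
    (∀ j, ∑ k, ∑ i, χ k i j ^ 2 = α) ∧
    (∀ i, ∑ k, ∑ j, φ k j i ^ 2 = α) ∧
    (∀ i j, ∑ k, χ k i j * φ k j i = G i j) ∧
    (0 < α → ∀ i j,
      ∑ k, χ k i j * φ k j i
        / (Real.sqrt (∑ k', ∑ i', χ k' i' j ^ 2)
            * Real.sqrt (∑ k', ∑ j', φ k' j' i ^ 2))
        = G i j / α) := by
  have pd : ∀ k, (0 : ℝ) < d k := fun k => by exact_mod_cast hd k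
  have pd' : ∀ k, (0 : ℝ) < d' k := fun k => by exact_mod_cast hd' k
  have A : ∀ j, ∑ k, ∑ i, χ k i j ^ 2 = α := by
    intro j
    rw [hα]
    refine Finset.sum_congr rfl fun k _ => ?_
    have hc : (Finset.univ.filter fun i => (i, j) ∈ S k).card = d k := by
      rw [← hcol k j]
      refine Finset.card_bij (fun i _ => (i, j)) ?_ ?_ ?_
      · intro i hi
        simpa using hi
      · intro i _ i' _ h
        exact (Prod.mk.inj h).1
      · rintro ⟨x, y⟩ h
        obtain ⟨h1, h2⟩ := Finset.mem_filter.1 h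
        simp only at h2
        subst h2
        exact ⟨x, by simpa using h1, rfl⟩
    rw [← zig_aux _ _ _ (pd k) (pd' k) (hg k)]
    simp only [hχ, ite_pow, ne_eq, OfNat.ofNat_ne_zero, not_false_eq_true, zero_pow]
    rw [← Finset.sum_filter, Finset.sum_const, hc, nsmul_eq_mul]
  have B : ∀ i, ∑ k, ∑ j, φ k j i ^ 2 = α := by
    intro i
    rw [hα]
    refine Finset.sum_congr rfl fun k _ => ?_
    have hc : (Finset.univ.filter fun j => (i, j) ∈ S k).card = d' k := by
      rw [← hrow k i]
      refine Finset.card_bij (fun j _ => (i, j)) ?_ ?_ ?_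
      · intro j hj
        simpa using hj
      · intro j _ j' _ h
        exact (Prod.mk.inj h).2
      · rintro ⟨x, y⟩ h
        obtain ⟨h1, h2⟩ := Finset.mem_filter.1 h
        simp only at h2
        subst h2
        exact ⟨y, by simpa using h1, rfl⟩
    rw [mul_comm (d k : ℝ), ← zig_aux _ _ _ (pd' k) (pd k) (hg k)]
    simp only [hφ, ite_pow, ne_eq, OfNat.ofNat_ne_zero, not_false_eq_true, zero_pow]
    rw [← Finset.sum_filter, Finset.sum_const, hc, nsmul_eq_mul]
  have C : ∀ i j, ∑ k, χ k i j * φ k j i = G i j := by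
    intro i j
    by_cases h : ∃ k, (i, j) ∈ S k
    · obtain ⟨k, hk⟩ := h
      rw [Finset.sum_eq_single k, hχ, hφ, if_pos hk, if_pos hk, hGmem k i j hk]
      · exact zig_prod _ _ _ (pd k) (pd' k) (hg k)
      · intro l _ hl
        have : (i, j) ∉ S l := fun hl' => Finset.disjoint_left.1 (hdisj l k hl) hl' hk
        rw [hχ, if_neg this, zero_mul]
      · intro h
        exact absurd (Finset.mem_univ k) h
    · push Not at h
      rw [hGnot i j h]
      refine Finset.sum_eq_zero fun k _ => ?_
      rw [hχ, if_neg (h k), zero_mul]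
  refine ⟨A, B, C, fun hpos i j => ?_⟩
  rw [← Finset.sum_div, A, B, C, Real.mul_self_sqrt hpos.le]
end
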